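/- Let n ≥ 1 be an integer and b a real number with 4 < n + 2b < 6, and set s_c = (n + 2b − 4)/2, so 0 < s_c < 1. Let Qψ > 0 and define ξ by ξ² = ( (n+2b)^{(n+2b)/2} · (6−n−2b)^{(4−n−2b)/2} / 4 ) · Qψ, and set Kψ = ((n+2b)/(6−n−2b))·Qψ and Eψ = ((n+2b−4)/(6−n−2b))·Qψ. Then: (i) ( ξ/(s_c+2) )² = Qψ^{1−s_c} · Kψ^{s_c}, and (ii) ( s_c/(s_c+2) )^{s_c} · ( ξ/(s_c+2) )² = Qψ^{1−s_c} · Eψ^{s_c}, where all powers are real powers (rpow). -/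

import Mathlib

/-!
With `m = n + 2b = 2(s_c + 2)` and `d = 6 - n - 2b`, the exponents in the sharp constant are
`s_c + 2` and `-s_c`, so dividing `(2ξ)²` by `m²` leaves `(m / d) ^ s_c * Qψ`. This is the
interpolation `Qψ ^ (1 - s_c) * Kψ ^ s_c`, since `Kψ` is `m / d` times `Qψ`. The energy threshold
is the kinetic one multiplied by `(Eψ / Kψ) ^ s_c`, and `Eψ / Kψ = s_c / (s_c + 2)`.
-/

lemma rpow_add_two_mul_rpow_neg_div_sq {m d : ℝ} (hm : 0 < m) (hd : 0 ≤ d) (s : ℝ) :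
    m ^ (s + 2) * d ^ (-s) / m ^ 2 = (m / d) ^ s := by
  rw [Real.rpow_add hm, Real.rpow_two, Real.rpow_neg hd, Real.div_rpow hm.le hd]
  field_simp

lemma rpow_one_sub_mul_mul_rpow {q c : ℝ} (hq : 0 < q) (hc : 0 ≤ c) (s : ℝ) :
    q ^ (1 - s) * (c * q) ^ s = c ^ s * q := by
  rw [Real.mul_rpow hc hq.le, mul_left_comm, ← Real.rpow_add hq, sub_add_cancel, Real.rpow_one]

lemma div_sq_eq_rpow_one_sub_mul_rpow {m d q x s : ℝ} (hm : 0 < m) (hd : 0 ≤ d) (hq : 0 < q)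
    (hx : x ^ 2 = m ^ (s + 2) * d ^ (-s) * q) :
    (x / m) ^ 2 = q ^ (1 - s) * (m / d * q) ^ s :=
  calc (x / m) ^ 2 = m ^ (s + 2) * d ^ (-s) / m ^ 2 * q := by rw [div_pow, hx, mul_div_right_comm]
    _ = (m / d) ^ s * q := by rw [rpow_add_two_mul_rpow_neg_div_sq hm hd]
    _ = q ^ (1 - s) * (m / d * q) ^ s :=
      (rpow_one_sub_mul_mul_rpow hq (div_nonneg hm.le hd) s).symm

/-- threshold computation: with `4 < n + 2b < 6`, `s_c = (n+2b−4)/2`,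
`Qψ > 0`, `ξ² = ((n+2b)^{(n+2b)/2}(6−n−2b)^{(4−n−2b)/2}/4)·Qψ`,
`Kψ = ((n+2b)/(6−n−2b))Qψ` and `Eψ = ((n+2b−4)/(6−n−2b))Qψ`, one has
`(ξ/(s_c+2))² = Qψ^{1−s_c} Kψ^{s_c}` and
`(s_c/(s_c+2))^{s_c} (ξ/(s_c+2))² = Qψ^{1−s_c} Eψ^{s_c}`. -/
theorem stmt14 (n : ℕ) (hn : 1 ≤ n) (b : ℝ)
    (h4 : 4 < (n : ℝ) + 2 * b) (h6 : (n : ℝ) + 2 * b < 6)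
    (sc : ℝ) (hsc : sc = ((n : ℝ) + 2 * b - 4) / 2)
    (Qψ : ℝ) (hQ : 0 < Qψ)
    (ξ : ℝ) (hξ : ξ ^ 2 = (((n : ℝ) + 2 * b) ^ (((n : ℝ) + 2 * b) / 2) *
        (6 - (n : ℝ) - 2 * b) ^ ((4 - (n : ℝ) - 2 * b) / 2) / 4) * Qψ)
    (Kψ : ℝ) (hK : Kψ = (((n : ℝ) + 2 * b) / (6 - (n : ℝ) - 2 * b)) * Qψ)
    (Eψ : ℝ) (hE : Eψ = (((n : ℝ) + 2 * b - 4) / (6 - (n : ℝ) - 2 * b)) * Qψ) :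
    (ξ / (sc + 2)) ^ 2 = Qψ ^ (1 - sc) * Kψ ^ sc ∧
    (sc / (sc + 2)) ^ sc * (ξ / (sc + 2)) ^ 2 = Qψ ^ (1 - sc) * Eψ ^ sc := by
  have hm : 0 < (n : ℝ) + 2 * b := by linarith
  have hd : 0 < 6 - (n : ℝ) - 2 * b := by linarith
  have hsc_pos : 0 < sc := by linarith
  have hm_half : ((n : ℝ) + 2 * b) / 2 = sc + 2 := by linarith
  have h_exp : (4 - (n : ℝ) - 2 * b) / 2 = -sc := by linarith
  have h_weinstein : (2 * ξ) ^ 2 =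
      ((n : ℝ) + 2 * b) ^ (sc + 2) * (6 - (n : ℝ) - 2 * b) ^ (-sc) * Qψ := by
    rw [mul_pow, hξ, hm_half, h_exp]
    ring
  have h_kinetic : (ξ / (sc + 2)) ^ 2 = Qψ ^ (1 - sc) * Kψ ^ sc := by
    rw [hK, ← div_sq_eq_rpow_one_sub_mul_rpow hm hd.le hQ h_weinstein, ← hm_half,
      div_div_eq_mul_div, mul_comm ξ]
  have h_energy_kinetic : Eψ = sc / (sc + 2) * Kψ := by
    rw [hE, hK, ← hm_half, hsc]
    field_simp
  have hK_pos : 0 < Kψ := hK ▸ mul_pos (div_pos hm hd) hQ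
  refine ⟨h_kinetic, ?_⟩
  rw [h_kinetic, h_energy_kinetic, Real.mul_rpow (by positivity) hK_pos.le, mul_left_comm]
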